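/- Let Z ⊆ Σ₂ be a nonempty compact shift-invariant set, f : Σ₂ × Σ₂ → ℝ continuous, and μ an ergodic shift-invariant measure. Then for μ-a.e. x, lim_{n→∞} inf_{y∈Z} (1/n) Σ_{i=0}^{n-1} f(σ^i x, σ^i y) exists and equals the infimum of ∫ f dm over all (σ×σ)-invariant measures m on Σ₂×Σ₂ whose first marginal is μ and whose second marginal gives Z full measure. -/

import Mathlib

open MeasureTheory Filter

noncomputable section

/-- The full two-sided shift space on two symbols. -/
abbrev Sig := ℤ → Bool

/-- The two-sided shift map. -/
def shift : Sig → Sig := fun x i => x (i + 1)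

/-- `birk φ n x = sup_{k ∈ ℤ} Σ_{i=0}^{n-1} φ(x_i, i+k)`, which equals
`log ‖L^φ_{x_{n-1}} ⋯ L^φ_{x_0}‖` for the associated weighted shift operators. -/
def birk (φ : Bool → ℤ → ℝ) (n : ℕ) (x : Sig) : ℝ :=
  ⨆ k : ℤ, ∑ i ∈ Finset.range n, φ (x (i : ℤ)) ((i : ℤ) + k)

/-- The top Lyapunov exponent `Λ(φ,μ) = inf_{n ≥ 1} (1/n) ∫ birk φ n dμ`
(the limit exists and equals this infimum by subadditivity). -/
def Lam (φ : Bool → ℤ → ℝ) (μ : Measure Sig) : ℝ :=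
  ⨅ n : ℕ, ((n : ℝ) + 1)⁻¹ * ∫ x, birk φ (n + 1) x ∂μ

/-- `log ϱ(L₀^φ, L₁^φ) = inf_{n ≥ 1} (1/n) sup_{x} birk φ n x`. -/
def logSpr (φ : Bool → ℤ → ℝ) : ℝ :=
  ⨅ n : ℕ, ((n : ℝ) + 1)⁻¹ * ⨆ x : Sig, birk φ (n + 1) x

/-!
Write `u n x` for the least `n`-step average of `f` along the orbits of `(x, y)`, `y ∈ Z`. Since `Z`
is forward invariant, `u n (T x) ≤ u n x + O(1 / n)`, so by ergodicity `limsup u n x` is almost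
everywhere a constant `c`. Every joining `m` is carried by points `(x, y)` with `y ∈ Z`, where the
Birkhoff averages of `f` are at least `u n x`; the maximal ergodic inequality, applied to `m`, then
gives `c ≤ ∫ f dm`. Conversely, let `x` be generic for `μ`. Along any ultrafilter on the times `n`,
the empirical measures on the orbits of points `(x, y n)` realising `u n x` converge weakly to a
joining `m` whose integral `∫ f dm` is the limit of `u n x`, hence at most `c`. So each ultrafilter
limit of `u n x` is the least value of `∫ f dm` over all joinings, and `u n x` converges to it.
-/

open Function Set Topology

variable {α β : Type*} {T : α → α} {g : α → ℝ}

/-- The running maximum of the Birkhoff sums of `g` over the times `0, …, N`; time `0` is included,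
so that it is nonnegative. It drives the maximal ergodic inequality. -/
def birkhoffMax (T : α → α) (g : α → ℝ) : ℕ →o α → ℝ :=
  partialSups (birkhoffSum T g)

lemma birkhoffSum_le_birkhoffMax (T : α → α) (g : α → ℝ) (N : ℕ) (x : α) :
    birkhoffSum T g N x ≤ birkhoffMax T g N x :=
  le_partialSups (birkhoffSum T g) N x

lemma birkhoffMax_nonneg (T : α → α) (g : α → ℝ) (N : ℕ) (x : α) : 0 ≤ birkhoffMax T g N x :=
  (birkhoffMax T g).monotone N.zero_le x

lemma birkhoffMax_le_max (T : α → α) (g : α → ℝ) (N : ℕ) (x : α) :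
    birkhoffMax T g N x ≤ max 0 (g x + birkhoffMax T g N (T x)) := by
  refine partialSups_le (birkhoffSum T g) N (fun x ↦ max 0 (g x + birkhoffMax T g N (T x)))
    (fun k hk x ↦ ?_) x
  cases k with
  | zero => exact le_max_left _ _
  | succ k =>
    rw [birkhoffSum_succ']
    refine le_max_of_le_right (add_le_add_right ?_ _)
    exact (birkhoffSum_le_birkhoffMax T g k (T x)).trans
      ((birkhoffMax T g).monotone (Nat.le_of_succ_le hk) (T x))

lemma birkhoffMax_sub_comp_le_indicator (T : α → α) (g : α → ℝ) (N : ℕ) (x : α) :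
    birkhoffMax T g N x - birkhoffMax T g N (T x) ≤
      {x | 0 < birkhoffMax T g N x}.indicator g x := by
  by_cases hx : 0 < birkhoffMax T g N x
  · rw [indicator_of_mem (by exact hx), sub_le_iff_le_add]
    exact (le_max_iff.1 (birkhoffMax_le_max T g N x)).resolve_left hx.not_ge
  · rw [indicator_of_notMem (by exact hx)]
    linarith [birkhoffMax_nonneg T g N (T x)]

lemma birkhoffSum_sub_const (T : α → α) (g : α → ℝ) (a : ℝ) (n : ℕ) (x : α) :
    birkhoffSum T (fun y ↦ g y - a) n x = birkhoffSum T g n x - n * a := by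
  simp [birkhoffSum]

section MeasurePreserving

variable [MeasurableSpace α] {μ : Measure α}

lemma integrable_birkhoffSum (hT : MeasurePreserving T μ μ) (hg : Integrable g μ) (n : ℕ) :
    Integrable (birkhoffSum T g n) μ :=
  integrable_finsetSum _ fun i _ ↦ (hT.iterate i).integrable_comp_of_integrable hg

lemma integrable_birkhoffMax (hT : MeasurePreserving T μ μ) (hg : Integrable g μ) (N : ℕ) :
    Integrable (birkhoffMax T g N) μ := by
  induction N with
  | zero => exact integrable_birkhoffSum hT hg 0
  | succ N ih =>
    rw [birkhoffMax, partialSups_add_one]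
    exact ih.sup (integrable_birkhoffSum hT hg (N + 1))

theorem integral_indicator_birkhoffMax_nonneg (hT : MeasurePreserving T μ μ)
    (hg : Integrable g μ) (N : ℕ) :
    0 ≤ ∫ x, {x | 0 < birkhoffMax T g N x}.indicator g x ∂μ := by
  have hM := integrable_birkhoffMax hT hg N
  have hMT : Integrable (fun x ↦ birkhoffMax T g N (T x)) μ := hT.integrable_comp_of_integrable hM
  have integral_comp : ∫ x, birkhoffMax T g N (T x) ∂μ = ∫ x, birkhoffMax T g N x ∂μ := by
    conv_rhs => rw [← hT.map_eq]
    exact (integral_map hT.aemeasurable (hT.map_eq.symm ▸ hM.aestronglyMeasurable)).symm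
  calc
    0 = ∫ x, (birkhoffMax T g N x - birkhoffMax T g N (T x)) ∂μ := by
      rw [integral_sub hM hMT, integral_comp, sub_self]
    _ ≤ ∫ x, {x | 0 < birkhoffMax T g N x}.indicator g x ∂μ :=
      integral_mono (hM.sub hMT)
        (hg.indicator₀ (nullMeasurableSet_lt aemeasurable_const hM.aemeasurable))
        (birkhoffMax_sub_comp_le_indicator T g N)

theorem integral_nonneg_of_exists_birkhoffSum_pos (hT : MeasurePreserving T μ μ)
    (hg : Integrable g μ) (hpos : ∀ᵐ x ∂μ, ∃ n, 0 < birkhoffSum T g n x) : 0 ≤ ∫ x, g x ∂μ := by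
  refine ge_of_tendsto' (tendsto_integral_of_dominated_convergence (fun x ↦ ‖g x‖)
    (fun N ↦ ?_) hg.norm (fun N ↦ ae_of_all _ fun x ↦ norm_indicator_le_norm_self _ _) ?_)
    (integral_indicator_birkhoffMax_nonneg hT hg)
  · exact hg.aestronglyMeasurable.indicator₀
      (nullMeasurableSet_lt aemeasurable_const (integrable_birkhoffMax hT hg N).aemeasurable)
  · filter_upwards [hpos] with x ⟨n, hn⟩
    refine tendsto_const_nhds.congr' ?_
    filter_upwards [eventually_ge_atTop n] with N hN
    have hNx : 0 < birkhoffMax T g N x :=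
      hn.trans_le <| (birkhoffSum_le_birkhoffMax T g n x).trans ((birkhoffMax T g).monotone hN x)
    exact (indicator_of_mem (by exact hNx) g).symm

theorem le_integral_of_le_limsup_birkhoffAverage [IsProbabilityMeasure μ]
    (hT : MeasurePreserving T μ μ) (hg : Integrable g μ) {c : EReal}
    (hc : ∀ᵐ x ∂μ, c ≤ limsup (fun n ↦ ((birkhoffAverage ℝ T g n x : ℝ) : EReal)) atTop) :
    c ≤ (∫ x, g x ∂μ : ℝ) := by
  refine EReal.ge_of_forall_gt_iff_ge.1 fun a hac ↦ EReal.coe_le_coe_iff.2 ?_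
  have hpos : ∀ᵐ x ∂μ, ∃ n, 0 < birkhoffSum T (fun y ↦ g y - a) n x := by
    filter_upwards [hc] with x hx
    obtain ⟨n, han, hn⟩ := ((frequently_lt_of_lt_limsup (h := hac.trans_le hx)).and_eventually
      (eventually_gt_atTop 0)).exists
    rw [EReal.coe_lt_coe_iff, birkhoffAverage, smul_eq_mul,
      lt_inv_mul_iff₀ (by exact_mod_cast hn)] at han
    exact ⟨n, by rw [birkhoffSum_sub_const]; linarith⟩
  simpa [integral_sub hg (integrable_const a)] using
    integral_nonneg_of_exists_birkhoffSum_pos hT (hg.sub (integrable_const a)) hpos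

end MeasurePreserving

lemma limsup_coe_le_of_le_add {ι : Type*} {l : Filter ι} [l.NeBot] {u v δ : ι → ℝ}
    (hδ : Tendsto δ l (𝓝 0)) (huv : ∀ i, u i ≤ v i + δ i) :
    limsup (fun i ↦ (u i : EReal)) l ≤ limsup (fun i ↦ (v i : EReal)) l := by
  have hδ_limsup : limsup (fun i ↦ (δ i : EReal)) l = 0 :=
    ((continuous_coe_real_ereal.tendsto 0).comp hδ).limsup_eq
  calc
    limsup (fun i ↦ (u i : EReal)) l
      ≤ limsup ((fun i ↦ (v i : EReal)) + fun i ↦ (δ i : EReal)) l :=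
        limsup_le_limsup (Eventually.of_forall fun i ↦ by
          simpa only [Pi.add_apply, ← EReal.coe_add, EReal.coe_le_coe_iff] using huv i)
    _ ≤ limsup (fun i ↦ (v i : EReal)) l + limsup (fun i ↦ (δ i : EReal)) l :=
        EReal.limsup_add_le (.inr (by simp [hδ_limsup])) (.inr (by simp [hδ_limsup]))
    _ = limsup (fun i ↦ (v i : EReal)) l := by rw [hδ_limsup, add_zero]

section Ergodic

variable [MeasurableSpace α] {μ : Measure α}

theorem ae_eq_const_of_comp_le [IsFiniteMeasure μ] (hT : Ergodic T μ) [Nonempty β] [LinearOrder β]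
    [TopologicalSpace β] [OrderTopology β] [SecondCountableTopology β] [MeasurableSpace β]
    [OpensMeasurableSpace β] {h : α → β} (hm : NullMeasurable h μ) (hle : ∀ x, h (T x) ≤ h x) :
    ∃ c, h =ᵐ[μ] const α c := by
  refine exists_eventuallyEq_const_of_forall_separating (· ∈ range (Ioi (α := β))) ?_
  rintro _ ⟨a, rfl⟩
  have hsub : T ⁻¹' (h ⁻¹' Ioi a) ⊆ h ⁻¹' Ioi a := fun x hx ↦ lt_of_lt_of_le hx (hle x)
  refine (hT.ae_empty_or_univ_of_preimage_ae_le (hm measurableSet_Ioi)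
    (.of_forall hsub)).symm.imp ?_ ?_
  · exact eventuallyEq_univ.1
  · exact eventuallyEq_empty.1

theorem exists_ae_limsup_coe_eq [IsFiniteMeasure μ] (hT : Ergodic T μ) {u : ℕ → α → ℝ}
    (hu : ∀ n, Measurable (u n)) {δ : ℕ → α → ℝ} (hδ : ∀ x, Tendsto (δ · x) atTop (𝓝 0))
    (hle : ∀ n x, u n (T x) ≤ u n x + δ n x) :
    ∃ c, ∀ᵐ x ∂μ, limsup (fun n ↦ (u n x : EReal)) atTop = c :=
  ae_eq_const_of_comp_le hT (Measurable.limsup fun n ↦ (hu n).coe_real_ereal).nullMeasurable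
    fun x ↦ limsup_coe_le_of_le_add (hδ x) (hle · x)

lemma measurable_birkhoffAverage (hT : Measurable T) (hg : Measurable g) (n : ℕ) :
    Measurable (birkhoffAverage ℝ T g n) :=
  .const_smul (Finset.measurable_fun_sum (Finset.range n) fun i _ ↦ hg.comp (hT.iterate i))
    (n : ℝ)⁻¹

variable [IsProbabilityMeasure μ]

theorem ae_limsup_birkhoffAverage_le (hT : Ergodic T μ) (hg : Measurable g)
    (hbdd : Bornology.IsBounded (range g)) :
    ∀ᵐ x ∂μ, limsup (fun n ↦ ((birkhoffAverage ℝ T g n x : ℝ) : EReal)) atTop ≤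
      (∫ x, g x ∂μ : ℝ) := by
  obtain ⟨C, hC⟩ := hbdd.exists_norm_le
  have hgi : Integrable g μ :=
    .of_bound hg.aestronglyMeasurable C (ae_of_all _ fun x ↦ hC _ (mem_range_self x))
  obtain ⟨c, hc⟩ := exists_ae_limsup_coe_eq hT (measurable_birkhoffAverage hT.measurable hg)
    (tendsto_birkhoffAverage_apply_sub_birkhoffAverage' ℝ hbdd T)
    (fun n x ↦ (add_sub_cancel _ _).ge)
  have hcg := le_integral_of_le_limsup_birkhoffAverage hT.toMeasurePreserving hgi
    (hc.mono fun x hx ↦ hx.ge)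
  exact hc.mono fun x hx ↦ hx.trans_le hcg

theorem ae_tendsto_birkhoffAverage (hT : Ergodic T μ) (hg : Measurable g)
    (hbdd : Bornology.IsBounded (range g)) :
    ∀ᵐ x ∂μ, Tendsto (birkhoffAverage ℝ T g · x) atTop (𝓝 (∫ x, g x ∂μ)) := by
  have hbdd_neg : Bornology.IsBounded (range (-g)) := by
    have := hbdd.neg
    rwa [← image_neg_eq_neg, ← range_comp] at this
  filter_upwards [ae_limsup_birkhoffAverage_le hT hg hbdd,
    ae_limsup_birkhoffAverage_le hT hg.neg hbdd_neg] with x hsup hsup_neg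
  refine EReal.tendsto_coe.1 (tendsto_of_le_liminf_of_limsup_le ?_ hsup)
  have hneg : (fun n ↦ ((birkhoffAverage ℝ T (-g) n x : ℝ) : EReal)) =
      -fun n ↦ ((birkhoffAverage ℝ T g n x : ℝ) : EReal) := by
    ext n
    simp [birkhoffAverage_neg]
  rw [hneg, EReal.limsup_neg] at hsup_neg
  simpa [integral_neg] using hsup_neg

end Ergodic

lemma continuous_birkhoffAverage [TopologicalSpace α] (hT : Continuous T) (hg : Continuous g)
    (n : ℕ) : Continuous (birkhoffAverage ℝ T g n) :=
  (continuous_finsetSum (Finset.range n) fun i _ ↦ hg.comp (hT.iterate i)).const_smul (n : ℝ)⁻¹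

lemma dist_birkhoffAverage_apply_le {E : Type*} [NormedAddCommGroup E] [NormedSpace ℝ E]
    {g : α → E} (hg : Bornology.IsBounded (range g)) (T : α → α) (n : ℕ) (x : α) :
    dist (birkhoffAverage ℝ T g n (T x)) (birkhoffAverage ℝ T g n x) ≤
      Metric.diam (range g) / n := by
  rw [dist_birkhoffAverage_apply_birkhoffAverage]
  gcongr
  exact Metric.dist_le_diam_of_mem hg (mem_range_self _) (mem_range_self _)

section EmpiricalMeasure

variable [MeasurableSpace α] [MeasurableSpace β] {S : β → β}

/-- The uniform probability measure on the orbit segment `x, T x, …, T^[n] x`. It has `n + 1` atoms,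
rather than `n`, so as to be a probability measure for every `n`. -/
def empiricalMeasure (T : α → α) (n : ℕ) (x : α) : ProbabilityMeasure α :=
  ⟨((n : ENNReal) + 1)⁻¹ • ∑ i ∈ Finset.range (n + 1), Measure.dirac (T^[i] x), ⟨by
    simpa using ENNReal.inv_mul_cancel (by simp) (by finiteness)⟩⟩

lemma coe_empiricalMeasure (T : α → α) (n : ℕ) (x : α) :
    (empiricalMeasure T n x : Measure α) =
      ((n : ENNReal) + 1)⁻¹ • ∑ i ∈ Finset.range (n + 1), Measure.dirac (T^[i] x) :=
  rfl

lemma integral_empiricalMeasure [MeasurableSingletonClass α] {E : Type*} [NormedAddCommGroup E]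
    [NormedSpace ℝ E] [CompleteSpace E] (T : α → α) (g : α → E) (n : ℕ) (x : α) :
    ∫ y, g y ∂(empiricalMeasure T n x : Measure α) = birkhoffAverage ℝ T g (n + 1) x := by
  rw [coe_empiricalMeasure, integral_smul_measure,
    integral_finsetSum_measure fun i _ ↦ integrable_dirac (by simp)]
  simp [birkhoffAverage, birkhoffSum, ENNReal.toReal_add]

lemma map_empiricalMeasure {φ : α → β} (hφ : Measurable φ) (h : Semiconj φ T S) (n : ℕ) (x : α) :
    (empiricalMeasure T n x).map hφ.aemeasurable = empiricalMeasure S n (φ x) := by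
  refine Subtype.ext ?_
  change Measure.map φ _ = _
  simp [coe_empiricalMeasure, Measure.map_finset_sum hφ.aemeasurable, Measure.map_dirac' hφ,
    (h.iterate_right _).eq]

lemma empiricalMeasure_apply_eq_one {F : Set α} (hF : MeasurableSet F) (hTF : MapsTo T F F) {x : α}
    (hx : x ∈ F) (n : ℕ) : (empiricalMeasure T n x : Measure α) F = 1 := by
  rw [← prob_compl_eq_zero_iff hF, coe_empiricalMeasure]
  simp [hF, (hTF.iterate _) hx]

end EmpiricalMeasure

section WeakLimits

variable [TopologicalSpace α] [MeasurableSpace α]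

section Equidistribution

variable [CompactSpace α]

lemma tendsto_probabilityMeasure_iff_forall_continuousMap [OpensMeasurableSpace α]
    {ι : Type*} {l : Filter ι} {ν : ι → ProbabilityMeasure α} {μ : ProbabilityMeasure α} :
    Tendsto ν l (𝓝 μ) ↔
      ∀ g : C(α, ℝ), Tendsto (fun i ↦ ∫ x, g x ∂(ν i : Measure α)) l
        (𝓝 (∫ x, g x ∂(μ : Measure α))) := by
  rw [ProbabilityMeasure.tendsto_iff_forall_integral_tendsto]
  exact (ContinuousMap.equivBoundedOfCompact α ℝ).symm.forall_congr_left

lemma lipschitzWith_integral_continuousMap [OpensMeasurableSpace α] (μ : Measure α)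
    [IsProbabilityMeasure μ] : LipschitzWith 1 fun g : C(α, ℝ) ↦ ∫ x, g x ∂μ := by
  have integrable (g : C(α, ℝ)) : Integrable g μ :=
    g.continuous.integrable_of_hasCompactSupport (.of_compactSpace g)
  refine .of_dist_le_mul fun g h ↦ ?_
  rw [dist_eq_norm, ← integral_sub (integrable g) (integrable h)]
  simpa [dist_eq_norm] using norm_integral_le_of_norm_le_const (μ := μ)
    (ae_of_all _ fun x ↦ (g - h).norm_coe_le_norm x)

lemma tendsto_probabilityMeasure_of_denseRange [OpensMeasurableSpace α]
    {ι κ : Type*} {l : Filter ι} {ν : ι → ProbabilityMeasure α} {μ : ProbabilityMeasure α}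
    {e : κ → C(α, ℝ)} (he : DenseRange e)
    (h : ∀ k, Tendsto (fun i ↦ ∫ x, e k x ∂(ν i : Measure α)) l
      (𝓝 (∫ x, e k x ∂(μ : Measure α)))) :
    Tendsto ν l (𝓝 μ) := by
  refine tendsto_probabilityMeasure_iff_forall_continuousMap.2 fun g ↦ he.induction_on g ?_ h
  have hequi := LipschitzWith.uniformEquicontinuous _ 1 fun i ↦
    lipschitzWith_integral_continuousMap (ν i : Measure α)
  exact hequi.equicontinuous.isClosed_setOfPred_tendsto
    (lipschitzWith_integral_continuousMap (μ : Measure α)).continuous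

theorem ae_tendsto_empiricalMeasure [T2Space α] [SecondCountableTopology α] [BorelSpace α]
    {μ : ProbabilityMeasure α} (hT : Ergodic T (μ : Measure α)) :
    ∀ᵐ x ∂(μ : Measure α), Tendsto (empiricalMeasure T · x) atTop (𝓝 μ) := by
  have hdense : ∀ᵐ x ∂(μ : Measure α), ∀ k,
      Tendsto (birkhoffAverage ℝ T (TopologicalSpace.denseSeq C(α, ℝ) k) · x) atTop
        (𝓝 (∫ x, TopologicalSpace.denseSeq C(α, ℝ) k x ∂(μ : Measure α))) :=
    ae_all_iff.2 fun k ↦ ae_tendsto_birkhoffAverage hT (map_continuous _).measurable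
      (isCompact_range (map_continuous _)).isBounded
  filter_upwards [hdense] with x hx
  refine tendsto_probabilityMeasure_of_denseRange (TopologicalSpace.denseRange_denseSeq _)
    fun k ↦ ?_
  simp only [integral_empiricalMeasure]
  exact (hx k).comp (tendsto_add_atTop_nat 1)

end Equidistribution

variable {l : Filter ℕ} {x : ℕ → α} {m : ProbabilityMeasure α}

lemma tendsto_empiricalMeasure_apply [OpensMeasurableSpace α] [MeasurableSingletonClass α]
    (hl : l ≤ atTop) (h : Tendsto (fun n ↦ empiricalMeasure T n (x n)) l (𝓝 m)) :
    Tendsto (fun n ↦ empiricalMeasure T n (T (x n))) l (𝓝 m) := by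
  rw [ProbabilityMeasure.tendsto_iff_forall_integral_tendsto] at h ⊢
  intro g
  have hdist : Tendsto (fun n : ℕ ↦ Metric.diam (range g) / (n + 1 : ℕ)) l (𝓝 0) :=
    (((tendsto_const_div_atTop_nhds_zero_nat _).comp (tendsto_add_atTop_nat 1)).mono_left hl)
  refine (h g).congr_dist (squeeze_zero (fun _ ↦ dist_nonneg) (fun n ↦ ?_) hdist)
  rw [integral_empiricalMeasure, integral_empiricalMeasure, dist_comm]
  exact dist_birkhoffAverage_apply_le g.isBounded_range T (n + 1) (x n)

theorem map_eq_of_tendsto_empiricalMeasure [BorelSpace α] [MeasurableSingletonClass α]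
    [HasOuterApproxClosed α] [l.NeBot] (hT : Continuous T) (hl : l ≤ atTop)
    (h : Tendsto (fun n ↦ empiricalMeasure T n (x n)) l (𝓝 m)) :
    (m : Measure α).map T = m := by
  have hmap := ProbabilityMeasure.tendsto_map_of_tendsto_of_continuous _ m h hT
  simp only [map_empiricalMeasure hT.measurable (Function.Commute.refl T).semiconj] at hmap
  exact congrArg ProbabilityMeasure.toMeasure
    (tendsto_nhds_unique hmap (tendsto_empiricalMeasure_apply hl h))

theorem apply_eq_one_of_tendsto_empiricalMeasure [OpensMeasurableSpace α] [HasOuterApproxClosed α]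
    [l.NeBot] {F : Set α} (hF : IsClosed F) (hTF : MapsTo T F F) (hx : ∀ n, x n ∈ F)
    (h : Tendsto (fun n ↦ empiricalMeasure T n (x n)) l (𝓝 m)) : (m : Measure α) F = 1 := by
  refine le_antisymm prob_le_one ?_
  simpa only [empiricalMeasure_apply_eq_one hF.measurableSet hTF (hx _), limsup_const] using
    ProbabilityMeasure.limsup_measure_closed_le_of_tendsto h hF

end WeakLimits

section Joinings

variable {X Y : Type*} {T : X → X} {S : Y → Y} {f : X × Y → ℝ} {Z : Set Y}

/-- `m` is a joining of the system `(T, μ)` with some `S`-invariant probability measure carried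
by `Z`. -/
structure IsJoiningOn [MeasurableSpace X] [MeasurableSpace Y] (T : X → X) (S : Y → Y)
    (μ : Measure X) (Z : Set Y) (m : Measure (X × Y)) : Prop where
  isProbabilityMeasure : IsProbabilityMeasure m
  map_eq : m.map (Prod.map T S) = m
  map_fst : m.map Prod.fst = μ
  map_snd_apply : (m.map Prod.snd) Z = 1

/-- The least Birkhoff average of `f` over `n` steps along the orbits of the points `(x, y)` of the
product system, `y` ranging over `Z`. It has the junk value `0` if `Z` is empty or these averages
are unbounded below. -/
def infOrbitAverage (T : X → X) (S : Y → Y) (f : X × Y → ℝ) (Z : Set Y) (n : ℕ) (x : X) : ℝ :=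
  ⨅ y : Z, birkhoffAverage ℝ (Prod.map T S) f n (x, y)

lemma infOrbitAverage_eq (T : X → X) (S : Y → Y) (f : X × Y → ℝ) (Z : Set Y) (n : ℕ) (x : X) :
    infOrbitAverage T S f Z n x =
      (n : ℝ)⁻¹ * ⨅ y : Z, ∑ i ∈ Finset.range n, f (T^[i] x, S^[i] y) := by
  simp [infOrbitAverage, birkhoffAverage, birkhoffSum, Prod.map_iterate,
    Real.mul_iInf_of_nonneg]

section Topological

variable [TopologicalSpace X] [TopologicalSpace Y]

variable (hT : Continuous T) (hS : Continuous S) (hf : Continuous f) (hZ : IsCompact Z)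
include hT hS hf hZ

lemma bddBelow_range_birkhoffAverage (n : ℕ) (x : X) :
    BddBelow (range fun y : Z ↦ birkhoffAverage ℝ (Prod.map T S) f n (x, y)) := by
  have := isCompact_iff_compactSpace.1 hZ
  have hcont := continuous_birkhoffAverage (hT.prodMap hS) hf n
  exact (isCompact_range (by fun_prop)).bddBelow

lemma infOrbitAverage_le (n : ℕ) (x : X) {y : Y} (hy : y ∈ Z) :
    infOrbitAverage T S f Z n x ≤ birkhoffAverage ℝ (Prod.map T S) f n (x, y) :=
  ciInf_le (bddBelow_range_birkhoffAverage hT hS hf hZ n x) ⟨y, hy⟩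

lemma exists_birkhoffAverage_eq_infOrbitAverage (hZne : Z.Nonempty) (n : ℕ) (x : X) :
    ∃ y ∈ Z, birkhoffAverage ℝ (Prod.map T S) f n (x, y) = infOrbitAverage T S f Z n x := by
  have hcont := continuous_birkhoffAverage (hT.prodMap hS) hf n
  obtain ⟨y, hy, hmin⟩ := hZ.exists_sInf_image_eq hZne
    (f := fun y ↦ birkhoffAverage ℝ (Prod.map T S) f n (x, y)) (by fun_prop)
  exact ⟨y, hy, by rw [← hmin, sInf_image', infOrbitAverage]⟩

lemma infOrbitAverage_apply_le (hZne : Z.Nonempty) (hSZ : MapsTo S Z Z)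
    (hbdd : Bornology.IsBounded (range f)) (n : ℕ) (x : X) :
    infOrbitAverage T S f Z n (T x) ≤ infOrbitAverage T S f Z n x + Metric.diam (range f) / n := by
  obtain ⟨y, hy, hxy⟩ := exists_birkhoffAverage_eq_infOrbitAverage hT hS hf hZ hZne n x
  calc
    infOrbitAverage T S f Z n (T x)
      ≤ birkhoffAverage ℝ (Prod.map T S) f n (Prod.map T S (x, y)) :=
        infOrbitAverage_le hT hS hf hZ n (T x) (hSZ hy)
    _ ≤ infOrbitAverage T S f Z n x + Metric.diam (range f) / n := by
        rw [← hxy, ← sub_le_iff_le_add']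
        exact (le_abs_self _).trans (dist_birkhoffAverage_apply_le hbdd (Prod.map T S) n (x, y))

lemma measurable_infOrbitAverage [MeasurableSpace X] [OpensMeasurableSpace X] (n : ℕ) :
    Measurable (infOrbitAverage T S f Z n) := by
  have hcont := continuous_birkhoffAverage (hT.prodMap hS) hf n
  exact (upperSemicontinuous_ciInf (fun x ↦ bddBelow_range_birkhoffAverage hT hS hf hZ n x)
    fun y : Z ↦ Continuous.upperSemicontinuous (by fun_prop)).measurable

end Topological

section Compact

variable [TopologicalSpace X] [CompactSpace X] [MeasurableSpace X] [TopologicalSpace Y]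
  [CompactSpace Y] {μ : Measure X}

theorem exists_ae_limsup_infOrbitAverage_eq [OpensMeasurableSpace X] [IsFiniteMeasure μ]
    (hT : Continuous T) (hS : Continuous S) (hf : Continuous f) (hZ : IsClosed Z)
    (hZne : Z.Nonempty) (hSZ : MapsTo S Z Z) (hTμ : Ergodic T μ) :
    ∃ c, ∀ᵐ x ∂μ, limsup (fun n ↦ (infOrbitAverage T S f Z n x : EReal)) atTop = c :=
  exists_ae_limsup_coe_eq hTμ (measurable_infOrbitAverage hT hS hf hZ.isCompact)
    (fun _ ↦ tendsto_const_div_atTop_nhds_zero_nat (Metric.diam (range f)))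
    (infOrbitAverage_apply_le hT hS hf hZ.isCompact hZne hSZ (isCompact_range hf).isBounded)

variable [BorelSpace X] [SecondCountableTopology Y] [MeasurableSpace Y] [BorelSpace Y]

theorem le_integral_of_le_limsup_infOrbitAverage (hT : Continuous T) (hS : Continuous S)
    (hf : Continuous f) (hZ : IsClosed Z) {c : EReal}
    (hc : ∀ᵐ x ∂μ, c ≤ limsup (fun n ↦ (infOrbitAverage T S f Z n x : EReal)) atTop)
    {m : Measure (X × Y)} (hm : IsJoiningOn T S μ Z m) : c ≤ (∫ p, f p ∂m : ℝ) := by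
  have := hm.isProbabilityMeasure
  have hmZ : ∀ᵐ p ∂m, p.2 ∈ Z := by
    refine (mem_ae_iff_prob_eq_one (measurable_snd hZ.measurableSet)).2 ?_
    rw [← Measure.map_apply measurable_snd hZ.measurableSet, hm.map_snd_apply]
  refine le_integral_of_le_limsup_birkhoffAverage ⟨(hT.prodMap hS).measurable, hm.map_eq⟩
    (hf.integrable_of_hasCompactSupport (.of_compactSpace f)) ?_
  filter_upwards [hmZ, ae_of_ae_map measurable_fst.aemeasurable (hm.map_fst.symm ▸ hc)]
    with p hpZ hp
  exact hp.trans (limsup_le_limsup (.of_forall fun n ↦ EReal.coe_le_coe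
    (infOrbitAverage_le hT hS hf hZ.isCompact n p.1 hpZ)))

variable [T2Space X] [SecondCountableTopology X] [T2Space Y]

theorem exists_isJoiningOn_tendsto_infOrbitAverage {μ : ProbabilityMeasure X} {x : X}
    (hT : Continuous T) (hS : Continuous S) (hf : Continuous f) (hZ : IsClosed Z)
    (hZne : Z.Nonempty) (hSZ : MapsTo S Z Z)
    (hx : Tendsto (empiricalMeasure T · x) atTop (𝓝 μ)) {U : Ultrafilter ℕ}
    (hU : (U : Filter ℕ) ≤ atTop) :
    ∃ m, IsJoiningOn T S μ Z m ∧
      Tendsto (fun n ↦ infOrbitAverage T S f Z (n + 1) x) U (𝓝 (∫ p, f p ∂m)) := by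
  choose y hyZ hy using fun n : ℕ ↦
    exists_birkhoffAverage_eq_infOrbitAverage hT hS hf hZ.isCompact hZne (n + 1) x
  let ν (n : ℕ) : ProbabilityMeasure (X × Y) := empiricalMeasure (Prod.map T S) n (x, y n)
  obtain ⟨m, hm⟩ : ∃ m, Tendsto ν U (𝓝 m) := ⟨_, (U.map ν).le_nhds_lim⟩
  have hfst : m.map measurable_fst.aemeasurable = μ := by
    have hmap := ProbabilityMeasure.tendsto_map_of_tendsto_of_continuous ν m hm continuous_fst
    have hsemi : Semiconj Prod.fst (Prod.map T S) T := fun _ ↦ rfl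
    simp only [ν, map_empiricalMeasure measurable_fst hsemi] at hmap
    exact tendsto_nhds_unique hmap (hx.mono_left hU)
  refine ⟨m, ⟨inferInstance, ?_, congrArg ProbabilityMeasure.toMeasure hfst, ?_⟩, ?_⟩
  · exact map_eq_of_tendsto_empiricalMeasure (hT.prodMap hS) hU hm
  · rw [Measure.map_apply measurable_snd hZ.measurableSet]
    exact apply_eq_one_of_tendsto_empiricalMeasure (hZ.preimage continuous_snd)
      (fun _ hp ↦ hSZ hp) hyZ hm
  · have hint := tendsto_probabilityMeasure_iff_forall_continuousMap.1 hm ⟨f, hf⟩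
    simpa only [ν, integral_empiricalMeasure, ContinuousMap.coe_mk, hy] using hint

theorem inf_orbit_average_tendsto_inf_joinings_general [IsProbabilityMeasure μ]
    (hT : Continuous T) (hS : Continuous S) (hf : Continuous f) (hZ : IsClosed Z)
    (hZne : Z.Nonempty) (hSZ : MapsTo S Z Z) (hTμ : Ergodic T μ) :
    ∀ᵐ x ∂μ, Tendsto
      (fun n : ℕ ↦ ((n : ℝ) + 1)⁻¹ *
        ⨅ y : Z, ∑ i ∈ Finset.range (n + 1), f (T^[i] x, S^[i] (y : Y)))
      atTop
      (𝓝 (sInf {r : ℝ | ∃ m : Measure (X × Y),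
        IsProbabilityMeasure m ∧ m.map (Prod.map T S) = m ∧
        m.map Prod.fst = μ ∧ (m.map Prod.snd) Z = 1 ∧ r = ∫ p, f p ∂m})) := by
  obtain ⟨c, hc⟩ := exists_ae_limsup_infOrbitAverage_eq hT hS hf hZ hZne hSZ hTμ
  have hcf {m} (hm : IsJoiningOn T S μ Z m) : c ≤ (∫ p, f p ∂m : ℝ) :=
    le_integral_of_le_limsup_infOrbitAverage hT hS hf hZ (hc.mono fun _ h ↦ h.ge) hm
  filter_upwards [hc, ae_tendsto_empiricalMeasure (μ := ⟨μ, ‹_›⟩) hTμ] with x hxc hx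
  refine (tendsto_iff_ultrafilter _ _ _).2 fun U hU ↦ ?_
  obtain ⟨m, hm, hlim⟩ :=
    exists_isJoiningOn_tendsto_infOrbitAverage hT hS hf hZ hZne hSZ hx hU
  have hmc : (∫ p, f p ∂m : ℝ) ≤ c := calc
    (∫ p, f p ∂m : ℝ) = limsup (fun n ↦ (infOrbitAverage T S f Z (n + 1) x : EReal)) U :=
      ((continuous_coe_real_ereal.tendsto _).comp hlim).limsup_eq.symm
    _ ≤ limsup (fun n ↦ (infOrbitAverage T S f Z (n + 1) x : EReal)) atTop :=
      limsup_le_limsup_of_le hU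
    _ = c := (limsup_nat_add (fun n ↦ (infOrbitAverage T S f Z n x : EReal)) 1).trans hxc
  rw [IsLeast.csInf_eq (a := ∫ p, f p ∂m)]
  · simpa [infOrbitAverage_eq] using hlim
  · refine ⟨⟨m, hm.isProbabilityMeasure, hm.map_eq, hm.map_fst, hm.map_snd_apply, rfl⟩, ?_⟩
    rintro _ ⟨m', hprob, hmap, hfst, hsnd, rfl⟩
    exact EReal.coe_le_coe_iff.1 (hmc.trans (hcf ⟨hprob, hmap, hfst, hsnd⟩))

end Compact

end Joinings

lemma continuous_shift : Continuous shift :=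
  continuous_pi fun i ↦ continuous_apply (i + 1)

/-- Let `Z ⊆ Σ₂` be a nonempty compact shift-invariant set, `f : Σ₂ × Σ₂ → ℝ` continuous,
and `μ` an ergodic shift-invariant Borel probability measure.  Then for `μ`-a.e. `x`,
`(1/n) inf_{y ∈ Z} Σ_{i<n} f(σ^i x, σ^i y)` converges to the infimum of `∫ f dm` over all
`(σ×σ)`-invariant Borel probability measures `m` on `Σ₂ × Σ₂` whose first marginal is `μ`
and whose second marginal gives `Z` full measure. -/
theorem inf_orbit_average_tendsto_inf_joinings
    (Z : Set Sig) (hZne : Z.Nonempty) (hZcpt : IsCompact Z) (hZinv : shift '' Z = Z)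
    (f : Sig × Sig → ℝ) (hf : Continuous f)
    (μ : Measure Sig) (hprob : IsProbabilityMeasure μ) (herg : Ergodic shift μ) :
    ∀ᵐ x ∂μ, Tendsto
      (fun n : ℕ => ((n : ℝ) + 1)⁻¹ *
        ⨅ y : Z, ∑ i ∈ Finset.range (n + 1), f (shift^[i] x, shift^[i] (y : Sig)))
      atTop
      (nhds (sInf {r : ℝ | ∃ m : Measure (Sig × Sig),
        IsProbabilityMeasure m ∧ m.map (Prod.map shift shift) = m ∧
        m.map Prod.fst = μ ∧ (m.map Prod.snd) Z = 1 ∧ r = ∫ p, f p ∂m})) :=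
  inf_orbit_average_tendsto_inf_joinings_general continuous_shift continuous_shift hf
    hZcpt.isClosed hZne (mapsTo_iff_image_subset.2 hZinv.subset) herg
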